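/- Let P be a complex polynomial of degree 2 having no zeros in |z| < 1, let α ∈ ℂ with |α| ≤ 1, and let R ≥ 1. Then max_{|z|=R}|P(z)| ≤ ((R^2 + 1)/2)·max_{|z|=1}|P(z)| − |α|·((R^2 − 1)/2)·min_{|z|=1}|P(z)| − ((R − 1)^2/2)·|P′(0)|. -/

import Mathlib

open Polynomial Metric

/-- The maximum of `|P(z)|` over the circle `|z| = r`. -/
noncomputable def maxMod (P : Polynomial ℂ) (r : ℝ) : ℝ :=
  ⨆ z : sphere (0 : ℂ) r, ‖(P.eval z : ℂ)‖

/-- The minimum of `|P(z)|` over the circle `|z| = r`. -/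
noncomputable def minMod (P : Polynomial ℂ) (r : ℝ) : ℝ :=
  ⨅ z : sphere (0 : ℂ) r, ‖(P.eval z : ℂ)‖

/-!
Let `Q(z) = n P(z) - z P'(z)`, where `n` bounds the degree of `P`, and let `|z| = 1`. If `P` has
no zeros in the open unit disc then every root `u` contributes `Re (z / (z - u)) ≤ 1 / 2` to
`z P'(z) / P(z)`, so this quotient is at least as close to `0` as to `n`, i.e. `|P'(z)| ≤ |Q(z)|`.

Applied to `P - c`, this gives `|P'(z)| ≤ |Q(z) - n c|` for every value `c` that `P` omits in the
disc. Letting `|c|` decrease to the maximum `M` of `|P|` on the circle yields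
`|P'| + |Q| ≤ n M`, and letting `|c|` increase to the minimum `m` yields `|P'| + n m ≤ |Q|`, hence
`|P'| ≤ n (M - m) / 2`.

For `P = a₀ + a₁ z + a₂ z²` the maximum of `|P'|` on the circle is `|a₁| + 2 |a₂|`, and
`|P(R z)| ≤ M + (R - 1) |a₁| + (R² - 1) |a₂|`, which equals
`M + (R² - 1) (|a₁| + 2 |a₂|) / 2 - (R - 1)² |a₁| / 2`.
-/

section ComplexNorm

theorem norm_ofReal_sub_sq (c : ℝ) (w : ℂ) :
    ‖(c : ℂ) - w‖ ^ 2 = ‖w‖ ^ 2 + c * (c - 2 * w.re) := by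
  simp only [Complex.sq_norm, Complex.normSq_apply, Complex.sub_re, Complex.sub_im,
    Complex.ofReal_re, Complex.ofReal_im]
  ring

theorem re_div_sub_le_half {z u : ℂ} (h : ‖z‖ ≤ ‖u‖) : (z / (z - u)).re ≤ 1 / 2 := by
  rcases eq_or_ne z u with rfl | hzu
  · simp
  have hsub : ((1 : ℝ) : ℂ) - z / (z - u) = -u / (z - u) := by
    have := sub_ne_zero.2 hzu
    push_cast
    field_simp
    ring
  have hnorm : ‖z / (z - u)‖ ≤ ‖((1 : ℝ) : ℂ) - z / (z - u)‖ := by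
    rw [hsub, norm_div, norm_div, norm_neg]
    gcongr
  have := norm_ofReal_sub_sq 1 (z / (z - u))
  nlinarith [norm_nonneg (z / (z - u))]

theorem exists_norm_eq_one_norm_add_mul (x y : ℂ) :
    ∃ z : ℂ, ‖z‖ = 1 ∧ ‖x + y * z‖ = ‖x‖ + ‖y‖ := by
  obtain ⟨c, hc, hcx⟩ := Complex.exists_norm_eq_mul_self x
  obtain ⟨d, hd, hdy⟩ := Complex.exists_norm_eq_mul_self y
  have hc0 : c ≠ 0 := norm_ne_zero_iff.1 (hc ▸ one_ne_zero)
  refine ⟨d / c, by rw [norm_div, hc, hd, div_one], ?_⟩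
  calc ‖x + y * (d / c)‖ = ‖c * (x + y * (d / c))‖ := by rw [norm_mul, hc, one_mul]
    _ = ‖((‖x‖ + ‖y‖ : ℝ) : ℂ)‖ := by
      congr 1
      push_cast
      rw [hcx, hdy]
      field_simp
    _ = ‖x‖ + ‖y‖ := Complex.norm_of_nonneg (by positivity)

end ComplexNorm

section ModulusPrinciples

theorem le_norm_of_forall_mem_frontier_le_norm {E : Type*} [NormedAddCommGroup E]
    [NormedSpace ℂ E] [Nontrivial E] {f : E → ℂ} {U : Set E} (hU : Bornology.IsBounded U)
    (hf : DiffContOnCl ℂ f U) (hne : ∀ z ∈ U, f z ≠ 0) {m : ℝ}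
    (hm : ∀ z ∈ frontier U, m ≤ ‖f z‖) {z : E} (hz : z ∈ closure U) : m ≤ ‖f z‖ := by
  rcases le_or_gt m 0 with hm0 | hm0
  · exact hm0.trans (norm_nonneg _)
  have hne' : ∀ w ∈ closure U, f w ≠ 0 := by
    intro w hw
    rw [closure_eq_self_union_frontier] at hw
    exact hw.elim (hne w) fun hw ↦ norm_pos_iff.1 (hm0.trans_le (hm w hw))
  have hinv : ‖f⁻¹ z‖ ≤ m⁻¹ :=
    Complex.norm_le_of_forall_mem_frontier_norm_le hU (hf.inv hne')
      (fun w hw ↦ by simpa only [Pi.inv_apply, norm_inv] using inv_anti₀ hm0 (hm w hw)) hz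
  rw [Pi.inv_apply, norm_inv] at hinv
  exact (inv_le_inv₀ (norm_pos_iff.2 (hne' z hz)) hm0).1 hinv

variable {P : ℂ[X]} {r : ℝ} {z : ℂ}

theorem norm_eval_le_maxMod (P : ℂ[X]) (hz : ‖z‖ = r) : ‖P.eval z‖ ≤ maxMod P r := by
  have hcont : Continuous fun w : sphere (0 : ℂ) r ↦ ‖P.eval (w : ℂ)‖ := by fun_prop
  exact le_ciSup (isCompact_range hcont).bddAbove ⟨z, mem_sphere_zero_iff_norm.2 hz⟩

theorem minMod_le_norm_eval (P : ℂ[X]) (hz : ‖z‖ = r) : minMod P r ≤ ‖P.eval z‖ :=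
  ciInf_le (f := fun w : sphere (0 : ℂ) r ↦ ‖P.eval (w : ℂ)‖)
    ⟨0, Set.forall_mem_range.2 fun _ ↦ norm_nonneg _⟩ ⟨z, mem_sphere_zero_iff_norm.2 hz⟩

theorem minMod_nonneg (P : ℂ[X]) (r : ℝ) : 0 ≤ minMod P r :=
  Real.iInf_nonneg fun _ ↦ norm_nonneg _

theorem norm_eval_le_maxMod_of_norm_lt (P : ℂ[X]) (hz : ‖z‖ < r) : ‖P.eval z‖ ≤ maxMod P r := by
  refine Complex.norm_le_of_forall_mem_frontier_norm_le (U := ball 0 r) (f := fun w ↦ P.eval w)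
    isBounded_ball P.differentiable.diffContOnCl (fun w hw ↦ norm_eval_le_maxMod P ?_)
    (subset_closure (mem_ball_zero_iff.2 hz))
  exact mem_sphere_zero_iff_norm.1 (frontier_ball_subset_sphere hw)

theorem minMod_le_norm_eval_of_norm_lt (hroots : ∀ w, P.IsRoot w → r ≤ ‖w‖) (hz : ‖z‖ < r) :
    minMod P r ≤ ‖P.eval z‖ := by
  refine le_norm_of_forall_mem_frontier_le_norm (U := ball 0 r) (f := fun w ↦ P.eval w)
    isBounded_ball P.differentiable.diffContOnCl (fun w hw hw0 ↦ ?_)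
    (fun w hw ↦ minMod_le_norm_eval P ?_) (subset_closure (mem_ball_zero_iff.2 hz))
  · exact (hroots w hw0).not_gt (mem_ball_zero_iff.1 hw)
  · exact mem_sphere_zero_iff_norm.1 (frontier_ball_subset_sphere hw)

end ModulusPrinciples

section DerivativeBounds

/-- The polar derivative `n P + (ζ - z) P'` of `P` at the pole `ζ = 0`, where `P` is regarded as a
polynomial of formal degree `n`. -/
noncomputable def polarDerivZero (n : ℕ) (P : ℂ[X]) : ℂ[X] :=
  C (n : ℂ) * P - X * derivative P

variable {P : ℂ[X]} {n : ℕ} {z : ℂ}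

theorem eval_polarDerivZero (n : ℕ) (P : ℂ[X]) (z : ℂ) :
    (polarDerivZero n P).eval z = n * P.eval z - z * P.derivative.eval z := by
  simp only [polarDerivZero, eval_sub, eval_mul, eval_C, eval_X]

theorem re_mul_eval_derivative_div_eval_le (hdeg : P.natDegree ≤ n)
    (hroots : ∀ w, P.IsRoot w → ‖z‖ ≤ ‖w‖) (hPz : P.eval z ≠ 0) :
    (z * (P.derivative.eval z / P.eval z)).re ≤ n / 2 := by
  have hsum : (z * (P.derivative.eval z / P.eval z)).re =
      (P.roots.map fun u ↦ (z / (z - u)).re).sum := by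
    rw [(IsAlgClosed.splits P).eval_derivative_div_eval_of_ne_zero hPz,
      ← Multiset.sum_map_mul_left]
    simpa only [Multiset.map_map, Function.comp_def, mul_one_div, Complex.coe_reAddGroupHom] using
      map_multiset_sum Complex.reAddGroupHom (P.roots.map fun u ↦ z / (z - u))
  calc (z * (P.derivative.eval z / P.eval z)).re
      = (P.roots.map fun u ↦ (z / (z - u)).re).sum := hsum
    _ ≤ P.roots.card • (1 / 2 : ℝ) := by
      rw [← Multiset.card_map]
      refine Multiset.sum_le_card_nsmul _ _ (Multiset.forall_mem_map_iff.2 fun u hu ↦ ?_)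
      exact re_div_sub_le_half (hroots u (isRoot_of_mem_roots hu))
    _ ≤ n / 2 := by
      have : (P.roots.card : ℝ) ≤ n := mod_cast P.card_roots'.trans hdeg
      rw [nsmul_eq_mul]
      linarith

theorem norm_mul_eval_derivative_le_norm_eval_polarDerivZero (hdeg : P.natDegree ≤ n)
    (hroots : ∀ w, P.IsRoot w → ‖z‖ ≤ ‖w‖) :
    ‖z * P.derivative.eval z‖ ≤ ‖(polarDerivZero n P).eval z‖ := by
  by_cases hPz : P.eval z = 0
  · simp [eval_polarDerivZero, hPz]
  obtain ⟨q, hq⟩ : ∃ q, q = z * (P.derivative.eval z / P.eval z) := ⟨_, rfl⟩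
  have hzP : z * P.derivative.eval z = P.eval z * q := by
    rw [hq]
    field_simp
  have hqn : ‖q‖ ≤ ‖((n : ℝ) : ℂ) - q‖ := by
    have hre := re_mul_eval_derivative_div_eval_le hdeg hroots hPz
    rw [← hq] at hre
    refine (sq_le_sq₀ (norm_nonneg _) (norm_nonneg _)).1 ?_
    rw [norm_ofReal_sub_sq, le_add_iff_nonneg_right]
    exact mul_nonneg n.cast_nonneg (by linarith)
  calc ‖z * P.derivative.eval z‖ = ‖P.eval z‖ * ‖q‖ := by rw [hzP, norm_mul]
    _ ≤ ‖P.eval z‖ * ‖((n : ℝ) : ℂ) - q‖ := by gcongr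
    _ = ‖(polarDerivZero n P).eval z‖ := by
      rw [← norm_mul, eval_polarDerivZero, hzP, Complex.ofReal_natCast]
      ring_nf

theorem norm_eval_derivative_le_abs_sub_of_omits (hdeg : P.natDegree ≤ n) (hz : ‖z‖ = 1) {t : ℝ}
    (ht : 0 ≤ t) (homit : ∀ w, ‖w‖ < 1 → ‖P.eval w‖ ≠ t) :
    ‖P.derivative.eval z‖ ≤ |‖(polarDerivZero n P).eval z‖ - n * t| := by
  set Q : ℂ := (polarDerivZero n P).eval z with hQ
  rw [eval_polarDerivZero] at hQ
  obtain ⟨e, he, heQ⟩ := Complex.exists_norm_eq_mul_self Q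
  -- The omitted value of modulus `t` closest to `Q / n`.
  set c : ℂ := t / e
  have he0 : e ≠ 0 := norm_ne_zero_iff.1 (he ▸ one_ne_zero)
  have hc : ‖c‖ = t := by rw [norm_div, he, div_one, Complex.norm_of_nonneg ht]
  have hroots : ∀ w, (P - C c).IsRoot w → ‖z‖ ≤ ‖w‖ := by
    intro w hw
    rw [IsRoot, eval_sub, eval_C, sub_eq_zero] at hw
    exact not_lt.1 fun hlt ↦ homit w (hz ▸ hlt) (hw ▸ hc)
  have hshift := norm_mul_eval_derivative_le_norm_eval_polarDerivZero (n := n)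
    (by rwa [natDegree_sub_C]) hroots
  simp only [eval_polarDerivZero, derivative_sub, derivative_C, sub_zero, eval_sub, eval_C]
    at hshift
  calc ‖P.derivative.eval z‖ = ‖z * P.derivative.eval z‖ := by rw [norm_mul, hz, one_mul]
    _ ≤ ‖n * (P.eval z - c) - z * P.derivative.eval z‖ := hshift
    _ = ‖e * (Q - n * c)‖ := by rw [norm_mul, he, one_mul, hQ]; congr 1; ring
    _ = ‖((‖Q‖ - n * t : ℝ) : ℂ)‖ := by
      congr 1
      push_cast
      rw [heQ, mul_sub, mul_left_comm e, mul_div_cancel₀ _ he0]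
    _ = |‖Q‖ - n * t| := Complex.norm_real _

theorem norm_eval_polarDerivZero_eq_of_omits (hdeg : P.natDegree ≤ n) (hn : n ≠ 0) (hz : ‖z‖ = 1)
    (homit : ∀ w, ‖w‖ < 1 → ‖P.eval w‖ ≠ ‖(polarDerivZero n P).eval z‖ / n) :
    ‖(polarDerivZero n P).eval z‖ = n * ‖P.eval z‖ := by
  have hzero := norm_eval_derivative_le_abs_sub_of_omits hdeg hz (by positivity) homit
  rw [mul_div_cancel₀ _ (Nat.cast_ne_zero.2 hn), sub_self, abs_zero, norm_le_zero_iff] at hzero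
  rw [eval_polarDerivZero, hzero, mul_zero, sub_zero, norm_mul, Complex.norm_natCast]

theorem norm_eval_derivative_add_norm_eval_polarDerivZero_le (hdeg : P.natDegree ≤ n)
    (hz : ‖z‖ = 1) :
    ‖P.derivative.eval z‖ + ‖(polarDerivZero n P).eval z‖ ≤ n * maxMod P 1 := by
  rcases n.eq_zero_or_pos with rfl | hn
  · simp [eval_polarDerivZero, derivative_of_natDegree_zero (Nat.le_zero.1 hdeg)]
  have hn' : (0 : ℝ) < n := Nat.cast_pos.2 hn
  have homit {t : ℝ} (ht : maxMod P 1 < t) (w : ℂ) (hw : ‖w‖ < 1) : ‖P.eval w‖ ≠ t :=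
    ((norm_eval_le_maxMod_of_norm_lt P hw).trans_lt ht).ne
  have hPz := norm_eval_le_maxMod P hz
  have hQM : ‖(polarDerivZero n P).eval z‖ ≤ n * maxMod P 1 := by
    by_contra! hlt
    rw [norm_eval_polarDerivZero_eq_of_omits hdeg hn.ne' hz
      (homit ((lt_div_iff₀' hn').2 hlt))] at hlt
    exact (lt_of_mul_lt_mul_left hlt hn'.le).not_ge hPz
  suffices (‖P.derivative.eval z‖ + ‖(polarDerivZero n P).eval z‖) / n ≤ maxMod P 1 from
    (div_le_iff₀' hn').1 this
  refine le_of_forall_gt_imp_ge_of_dense fun t ht ↦ (div_le_iff₀' hn').2 ?_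
  have hbound := norm_eval_derivative_le_abs_sub_of_omits hdeg hz
    ((norm_nonneg _).trans (hPz.trans ht.le)) (homit ht)
  rw [abs_of_nonpos (by nlinarith)] at hbound
  linarith

theorem norm_eval_derivative_add_mul_minMod_le_norm_eval_polarDerivZero (hdeg : P.natDegree ≤ n)
    (hroots : ∀ w, P.IsRoot w → 1 ≤ ‖w‖) (hz : ‖z‖ = 1) :
    ‖P.derivative.eval z‖ + n * minMod P 1 ≤ ‖(polarDerivZero n P).eval z‖ := by
  have hzero := norm_mul_eval_derivative_le_norm_eval_polarDerivZero (z := z) hdeg (by rwa [hz])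
  rw [norm_mul, hz, one_mul] at hzero
  rcases n.eq_zero_or_pos with rfl | hn
  · simpa using hzero
  have hn' : (0 : ℝ) < n := Nat.cast_pos.2 hn
  have homit {t : ℝ} (ht : t < minMod P 1) (w : ℂ) (hw : ‖w‖ < 1) : ‖P.eval w‖ ≠ t :=
    (ht.trans_le (minMod_le_norm_eval_of_norm_lt hroots hw)).ne'
  have hPz := minMod_le_norm_eval P hz
  have hmQ : n * minMod P 1 ≤ ‖(polarDerivZero n P).eval z‖ := by
    by_contra! hlt
    rw [norm_eval_polarDerivZero_eq_of_omits hdeg hn.ne' hz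
      (homit ((div_lt_iff₀' hn').2 hlt))] at hlt
    exact (lt_of_mul_lt_mul_left hlt hn'.le).not_ge hPz
  suffices minMod P 1 ≤ (‖(polarDerivZero n P).eval z‖ - ‖P.derivative.eval z‖) / n by
    rw [le_div_iff₀' hn'] at this
    linarith
  refine le_of_forall_lt_imp_le_of_dense fun t ht ↦ (le_div_iff₀' hn').2 ?_
  rcases le_total t 0 with ht0 | ht0
  · nlinarith
  have hbound := norm_eval_derivative_le_abs_sub_of_omits hdeg hz ht0 (homit ht)
  rw [abs_of_nonneg (by nlinarith)] at hbound
  linarith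

theorem norm_eval_derivative_le_maxMod_sub_minMod (hdeg : P.natDegree ≤ n)
    (hroots : ∀ w, P.IsRoot w → 1 ≤ ‖w‖) (hz : ‖z‖ = 1) :
    ‖P.derivative.eval z‖ ≤ n / 2 * (maxMod P 1 - minMod P 1) := by
  linarith [norm_eval_derivative_add_norm_eval_polarDerivZero_le hdeg hz,
    norm_eval_derivative_add_mul_minMod_le_norm_eval_polarDerivZero hdeg hroots hz]

end DerivativeBounds

section CoefficientBounds

variable {P : ℂ[X]}

theorem exists_norm_eq_one_norm_eval_eq_of_natDegree_le_one (hdeg : P.natDegree ≤ 1) :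
    ∃ z : ℂ, ‖z‖ = 1 ∧ ‖P.eval z‖ = ‖P.coeff 0‖ + ‖P.coeff 1‖ := by
  obtain ⟨z, hz, hsum⟩ := exists_norm_eq_one_norm_add_mul (P.coeff 0) (P.coeff 1)
  refine ⟨z, hz, ?_⟩
  rw [← hsum, eval_eq_sum_range' (Nat.lt_succ_of_le hdeg)]
  simp [Finset.sum_range_succ]

theorem norm_coeff_one_add_two_mul_norm_coeff_two_le (hdeg : P.natDegree ≤ 2)
    (hroots : ∀ w, P.IsRoot w → 1 ≤ ‖w‖) :
    ‖P.coeff 1‖ + 2 * ‖P.coeff 2‖ ≤ maxMod P 1 - minMod P 1 := by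
  obtain ⟨z, hz, heval⟩ := exists_norm_eq_one_norm_eval_eq_of_natDegree_le_one
    (P.natDegree_derivative_le.trans (Nat.sub_le_sub_right hdeg 1))
  have hbound := norm_eval_derivative_le_maxMod_sub_minMod hdeg hroots hz
  have hcoeff_zero : P.derivative.coeff 0 = P.coeff 1 := by simp [coeff_derivative]
  have hcoeff_one : ‖P.derivative.coeff 1‖ = 2 * ‖P.coeff 2‖ := by
    rw [coeff_derivative, norm_mul, mul_comm]
    norm_num
  rw [heval, hcoeff_zero, hcoeff_one, Nat.cast_ofNat] at hbound
  linarith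

theorem norm_eval_le_maxMod_one_add_sum {n : ℕ} {w : ℂ} (hdeg : P.natDegree < n)
    (hw : 1 ≤ ‖w‖) :
    ‖P.eval w‖ ≤ maxMod P 1 + ∑ k ∈ Finset.range n, (‖w‖ ^ k - 1) * ‖P.coeff k‖ := by
  have hw0 : ‖w‖ ≠ 0 := (zero_lt_one.trans_le hw).ne'
  obtain ⟨z, hz, hwz⟩ : ∃ z : ℂ, ‖z‖ = 1 ∧ w = ‖w‖ * z :=
    ⟨w / ‖w‖, by simp [hw0], (mul_div_cancel₀ w (Complex.ofReal_ne_zero.2 hw0)).symm⟩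
  have hterm (k : ℕ) :
      ‖P.coeff k * w ^ k - P.coeff k * z ^ k‖ = (‖w‖ ^ k - 1) * ‖P.coeff k‖ := by
    have hfactor : P.coeff k * w ^ k - P.coeff k * z ^ k =
        ((‖w‖ ^ k - 1 : ℝ) : ℂ) * (P.coeff k * z ^ k) := by
      conv_lhs => rw [hwz]
      push_cast
      ring
    rw [hfactor, norm_mul, norm_mul, norm_pow, hz, one_pow, mul_one,
      Complex.norm_of_nonneg (sub_nonneg.2 (one_le_pow₀ hw))]
  calc ‖P.eval w‖ ≤ ‖P.eval z‖ + ‖P.eval w - P.eval z‖ := norm_le_norm_add_norm_sub' _ _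
    _ ≤ maxMod P 1 + ∑ k ∈ Finset.range n, ‖P.coeff k * w ^ k - P.coeff k * z ^ k‖ := by
      refine add_le_add (norm_eval_le_maxMod P hz) ?_
      rw [eval_eq_sum_range' hdeg, eval_eq_sum_range' hdeg, ← Finset.sum_sub_distrib]
      exact norm_sum_le _ _
    _ = _ := by simp only [hterm]

theorem norm_eval_le_of_natDegree_le_two (hdeg : P.natDegree ≤ 2)
    (hroots : ∀ w, P.IsRoot w → 1 ≤ ‖w‖) {w : ℂ} (hw : 1 ≤ ‖w‖) :
    ‖P.eval w‖ ≤ (‖w‖ ^ 2 + 1) / 2 * maxMod P 1 - (‖w‖ ^ 2 - 1) / 2 * minMod P 1 -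
      (‖w‖ - 1) ^ 2 / 2 * ‖P.coeff 1‖ := by
  have hgrowth := norm_eval_le_maxMod_one_add_sum (Nat.lt_succ_of_le hdeg) hw
  simp only [Finset.sum_range_succ, Finset.sum_range_zero, pow_zero, pow_one, sub_self, zero_mul,
    zero_add] at hgrowth
  have hcoeff := mul_le_mul_of_nonneg_left
    (norm_coeff_one_add_two_mul_norm_coeff_two_le hdeg hroots)
    (show 0 ≤ (‖w‖ ^ 2 - 1) / 2 by nlinarith)
  linarith

end CoefficientBounds

theorem stmt_8 (P : Polynomial ℂ) (hdeg : P.natDegree = 2)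
    (hroots : ∀ w : ℂ, P.IsRoot w → 1 ≤ ‖w‖)
    (α : ℂ) (hα : ‖α‖ ≤ 1) (R : ℝ) (hR : 1 ≤ R) :
    maxMod P R ≤
      ((R ^ 2 + 1) / 2) * maxMod P 1 -
        ‖α‖ * ((R ^ 2 - 1) / 2) * minMod P 1 -
        ((R - 1) ^ 2 / 2) * ‖(Polynomial.derivative P).eval 0‖ := by
  have : Nonempty (sphere (0 : ℂ) R) := (NormedSpace.sphere_nonempty.2 (by linarith)).to_subtype
  refine ciSup_le fun w ↦ ?_
  have hw : ‖(w : ℂ)‖ = R := mem_sphere_zero_iff_norm.1 w.2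
  have hbound := norm_eval_le_of_natDegree_le_two hdeg.le hroots (hw ▸ hR)
  have hderiv : (Polynomial.derivative P).eval 0 = P.coeff 1 := by
    rw [← coeff_zero_eq_eval_zero, coeff_derivative]
    simp
  have hmin : ‖α‖ * ((R ^ 2 - 1) / 2 * minMod P 1) ≤ (R ^ 2 - 1) / 2 * minMod P 1 :=
    mul_le_of_le_one_left (mul_nonneg (by nlinarith) (minMod_nonneg P 1)) hα
  rw [hw] at hbound
  rw [hderiv]
  linarith
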